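/- Let s ≥ 3 and e ≥ 2 be integers. In R(3,2^e−2)^{⊗s}, the element (z_{2,1}^{2^{e+1}−1} · z_{2,2}^{2^{e+1}−2} · z_{2,3}^{2^e−1}) · (z_{3,1}^{2^e−1} · z_{3,2}^{2^e−1} · z_{3,3}^{2^{e+1}−3}) · ∏_{i=4}^{s} (z_{i,1}^{2^e} · z_{i,2}^{2^e−1} · z_{i,3}^{2^e−2}) is nonzero (the product over 4 ≤ i ≤ s being empty if s = 3). Moreover, for s = 3 this element equals the top basis element ∏_{i=1}^{3} x_{i,1}^{2^e} · x_{i,2}^{2^e−1} · x_{i,3}^{2^e−2}. -/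

import Mathlib

/-!
Put `q = 2 ^ e`, so that `R(3, q - 2)` has generators `x, y, z` subject to `h_{q+1}(x) = 0`,
`h_q(x, y) = 0` and `h_{q-1}(x, y, z) = 0`. By
`(u - v) h_d(u, v, …) = h_{d+1}(u, …) - h_{d+1}(v, …)` these relations are symmetric in `x, y, z`.
A factor `x ^ q` truncates them to `x ^ q y ^ q = 0`, `x ^ q y ^ (q-1) z ^ (q-1) = 0` and so on; up
to sign, all permutations of the exponents of the top monomial `T = x ^ q y ^ (q-1) z ^ (q-2)` give
the same element.

Let `a, b, c` be the generators in the first three tensor factors. As `(u + v) ^ q = u ^ q + v ^ q`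
and `u ^ (q+1) = v ^ (q+1) = 0`, a power of `u + v` with exponent at least `q` has only two terms.
Therefore `G = (a₁ + b₁) ^ (2q-1) (a₂ + b₂) ^ (2q-2)` has only two terms, it is annihilated by `a₁`
and by `a₃ ^ q`, and multiplying it by `(a₁ + c₁) ^ (q-1) (a₃ + c₃) ^ (2q-3)` amounts to multiplying
it by `a₃ ^ (q-3) c₁ ^ (q-1) c₃ ^ q`. Only the term linear in `a₂` of `(a₂ + c₂) ^ (q-1)`, and then
only the term linear in `a₃` of `(a₃ + b₃) ^ (q-1)`, survives multiplication by the result. What is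
left is `T(a) T(b) T(c)`. As `T(a)` is annihilated by the `aⱼ`, on the remaining factors `z_{i,j}`
acts as `x_{i,j}`.

The top monomial is nonzero because `h_d` is monic in each variable: `R(k, m)` maps to a tower of
monic extensions of `ZMod 2`, in which the top monomial is the product of the highest powers
occurring in the power bases. A pure tensor of nonzero vectors over a field is nonzero.
-/

open scoped TensorProduct

/-- Complete homogeneous symmetric polynomial of degree `d` in a list of elements
of a commutative (semi)ring: `h_d(l)`. -/
noncomputable def completeHomog {R : Type*} [CommSemiring R] : List R → ℕ → R
  | [], 0 => 1
  | [], _ + 1 => 0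
  | x :: l, d => ∑ t ∈ Finset.range (d + 1), x ^ t * completeHomog l (d - t)

/-- Elementary symmetric polynomial of degree `d` in a list of elements: `e_d(l)`. -/
noncomputable def elemSymm {R : Type*} [CommSemiring R] : List R → ℕ → R
  | _, 0 => 1
  | [], _ + 1 => 0
  | x :: l, d + 1 => elemSymm l (d + 1) + x * elemSymm l d

/-- The ideal of `(ZMod 2)[x_1, …, x_k]` generated by the complete homogeneous
symmetric polynomials `h_{m+i}(x_1, …, x_{k+1-i})` for `1 ≤ i ≤ k`. -/
noncomputable def flagIdeal (k m : ℕ) : Ideal (MvPolynomial (Fin k) (ZMod 2)) :=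
  Ideal.span { p | ∃ i : ℕ, 1 ≤ i ∧ i ≤ k ∧
    p = completeHomog (((List.finRange k).take (k + 1 - i)).map MvPolynomial.X) (m + i) }

/-- `R(k,m)`, the quotient of `(ZMod 2)[x_1, …, x_k]` by `flagIdeal k m`;
this is the mod-2 cohomology ring of the real flag manifold `F(1^k, m)`. -/
abbrev FlagRing (k m : ℕ) : Type :=
  MvPolynomial (Fin k) (ZMod 2) ⧸ flagIdeal k m

/-- The image of the variable `x_{j+1}` in `R(k,m)` (`j` is 0-indexed). -/
noncomputable def xGen (k m : ℕ) (j : Fin k) : FlagRing k m :=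
  Ideal.Quotient.mk (flagIdeal k m) (MvPolynomial.X j)

/-- The zero-divisor `z_{j+1} = x_{j+1} ⊗ 1 + 1 ⊗ x_{j+1}` in `R(k,m) ⊗ R(k,m)`. -/
noncomputable def zGen (k m : ℕ) (j : Fin k) :
    FlagRing k m ⊗[ZMod 2] FlagRing k m :=
  xGen k m j ⊗ₜ 1 + 1 ⊗ₜ xGen k m j

/-- `x_{i+1,j+1}` in the `s`-fold tensor power `R(k,m)^{⊗ s}`: the element having
`x_{j+1}` in the `(i+1)`-st tensor factor and `1` elsewhere (`i`, `j` 0-indexed). -/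
noncomputable def xT (k m s : ℕ) (i : Fin s) (j : Fin k) :
    ⨂[ZMod 2] _ : Fin s, FlagRing k m :=
  PiTensorProduct.tprod (ZMod 2) (fun t => if t = i then xGen k m j else 1)

/-- The `s`-th zero-divisor `z_{i+1,j+1} = x_{1,j+1} + x_{i+1,j+1}` in `R(k,m)^{⊗ s}`. -/
noncomputable def zT (k m s : ℕ) (hs : 0 < s) (i : Fin s) (j : Fin k) :
    ⨂[ZMod 2] _ : Fin s, FlagRing k m :=
  xT k m s ⟨0, hs⟩ j + xT k m s i j

/-! ### Complete homogeneous polynomials -/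

section CompleteHomog

variable {A : Type*}

theorem completeHomog_zero [CommSemiring A] (l : List A) : completeHomog l 0 = 1 := by
  induction l with
  | nil => rfl
  | cons x l ih => simp [completeHomog, ih]

theorem completeHomog_cons_succ [CommSemiring A] (x : A) (l : List A) (d : ℕ) :
    completeHomog (x :: l) (d + 1) =
      completeHomog l (d + 1) + x * completeHomog (x :: l) d := by
  simp only [completeHomog]
  rw [Finset.sum_range_succ', Finset.mul_sum, add_comm]
  simp only [pow_zero, one_mul, Nat.sub_zero, Nat.add_sub_add_right, pow_succ', mul_assoc]

theorem completeHomog_singleton [CommSemiring A] (x : A) (d : ℕ) :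
    completeHomog [x] d = x ^ d := by
  induction d with
  | zero => rw [completeHomog_zero, pow_zero]
  | succ d ih => rw [completeHomog_cons_succ, ih, completeHomog, zero_add, pow_succ']

theorem map_completeHomog {B : Type*} [CommSemiring A] [CommSemiring B] (f : A →+* B)
    (l : List A) (d : ℕ) : f (completeHomog l d) = completeHomog (l.map f) d := by
  induction l generalizing d with
  | nil => cases d <;> simp [completeHomog]
  | cons x l ih => simp [completeHomog, ih]

theorem mul_completeHomog_cons_of_mul_eq_zero [CommSemiring A] {w x : A} (h : w * x = 0)
    (l : List A) (d : ℕ) : w * completeHomog (x :: l) d = w * completeHomog l d := by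
  cases d with
  | zero => simp only [completeHomog_zero]
  | succ d => rw [completeHomog_cons_succ, mul_add, ← mul_assoc, h, zero_mul, add_zero]

theorem mul_completeHomog_cons_succ_of_mul_sq_eq_zero [CommSemiring A] {w x : A}
    (h : w * x ^ 2 = 0) (l : List A) (d : ℕ) :
    w * completeHomog (x :: l) (d + 1) =
      w * completeHomog l (d + 1) + w * x * completeHomog l d := by
  rw [completeHomog_cons_succ, mul_add, ← mul_assoc,
    mul_completeHomog_cons_of_mul_eq_zero (by rw [mul_assoc, ← sq, h])]

theorem sub_mul_completeHomog_cons_cons [CommRing A] (x y : A) (l : List A) (d : ℕ) :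
    (x - y) * completeHomog (x :: y :: l) d =
      completeHomog (x :: l) (d + 1) - completeHomog (y :: l) (d + 1) := by
  induction d with
  | zero => simp only [completeHomog_cons_succ, completeHomog_zero]; ring
  | succ d ih =>
    rw [completeHomog_cons_succ x (y :: l), completeHomog_cons_succ x l (d + 1),
      completeHomog_cons_succ y l (d + 1)]
    linear_combination x * ih

theorem completeHomog_swap [CommRing A] (x y : A) (l : List A) (d : ℕ) :
    completeHomog (x :: y :: l) d = completeHomog (y :: x :: l) d := by
  induction d with
  | zero => simp only [completeHomog_zero]
  | succ d ih =>
    rw [completeHomog_cons_succ x (y :: l), completeHomog_cons_succ y (x :: l), ← ih]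
    linear_combination sub_mul_completeHomog_cons_cons x y l d

theorem completeHomog_perm [CommRing A] {l l' : List A} (h : l.Perm l') (d : ℕ) :
    completeHomog l d = completeHomog l' d := by
  induction h generalizing d with
  | nil => rfl
  | cons x _ ih => simp only [completeHomog, ih]
  | swap x y l => exact completeHomog_swap y x l d
  | trans _ _ ih₁ ih₂ => exact (ih₁ d).trans (ih₂ d)

end CompleteHomog

/-! ### Monomial relations -/

/-- The elements `x, y, z` of `A` satisfy the relations defining `R(3, m)`. -/
structure IsFlagTriple {A : Type*} [CommSemiring A] (m : ℕ) (x y z : A) : Prop where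
  completeHomog_one : completeHomog [x] (m + 3) = 0
  completeHomog_two : completeHomog [x, y] (m + 2) = 0
  completeHomog_three : completeHomog [x, y, z] (m + 1) = 0

namespace IsFlagTriple

theorem map {A B : Type*} [CommSemiring A] [CommSemiring B] {m : ℕ} {x y z : A}
    (h : IsFlagTriple m x y z) (f : A →+* B) : IsFlagTriple m (f x) (f y) (f z) where
  completeHomog_one := by simpa [map_completeHomog] using congrArg f h.completeHomog_one
  completeHomog_two := by simpa [map_completeHomog] using congrArg f h.completeHomog_two
  completeHomog_three := by simpa [map_completeHomog] using congrArg f h.completeHomog_three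

variable {A : Type*} [CommRing A] {m : ℕ} {x y z : A}

theorem swap_left (h : IsFlagTriple m x y z) : IsFlagTriple m y x z where
  completeHomog_one := by
    have hxy := sub_mul_completeHomog_cons_cons x y [] (m + 2)
    rw [h.completeHomog_two, h.completeHomog_one] at hxy
    linear_combination hxy
  completeHomog_two := completeHomog_swap y x _ _ ▸ h.completeHomog_two
  completeHomog_three := completeHomog_swap y x _ _ ▸ h.completeHomog_three

theorem swap_right (h : IsFlagTriple m x y z) : IsFlagTriple m x z y where
  completeHomog_one := h.completeHomog_one
  completeHomog_two := by
    have hyz := sub_mul_completeHomog_cons_cons y z [x] (m + 1)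
    rw [completeHomog_perm (l := [y, z, x]) (List.perm_append_singleton x [y, z]),
      h.completeHomog_three, completeHomog_swap y x, h.completeHomog_two,
      completeHomog_swap z x] at hyz
    linear_combination hyz
  completeHomog_three := completeHomog_perm ((List.Perm.swap y z []).cons x) _ ▸
    h.completeHomog_three

theorem pow_left_eq_zero (h : IsFlagTriple m x y z) : x ^ (m + 3) = 0 := by
  rw [← completeHomog_singleton, h.completeHomog_one]

theorem pow_mul_pow_eq_zero (h : IsFlagTriple m x y z) : x ^ (m + 2) * y ^ (m + 2) = 0 := by
  rw [← completeHomog_singleton y,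
    ← mul_completeHomog_cons_of_mul_eq_zero (by rw [← pow_succ, h.pow_left_eq_zero]),
    h.completeHomog_two, mul_zero]

theorem pow_mul_pow_comm (h : IsFlagTriple m x y z) :
    x ^ (m + 1) * y ^ (m + 2) = -(x ^ (m + 2) * y ^ (m + 1)) := by
  have hxy := mul_completeHomog_cons_succ_of_mul_sq_eq_zero (w := x ^ (m + 1))
    (by rw [← pow_add, h.pow_left_eq_zero]) [y] (m + 1)
  rw [h.completeHomog_two, completeHomog_singleton, completeHomog_singleton] at hxy
  linear_combination -hxy

theorem pow_mul_completeHomog_pair (h : IsFlagTriple m x y z) :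
    x ^ (m + 2) * completeHomog [y, z] (m + 1) = 0 := by
  rw [← mul_completeHomog_cons_of_mul_eq_zero (by rw [← pow_succ, h.pow_left_eq_zero]),
    h.completeHomog_three, mul_zero]

theorem pow_mul_pow_mul_pow_eq_zero (h : IsFlagTriple m x y z) :
    x ^ (m + 2) * y ^ (m + 1) * z ^ (m + 1) = 0 := by
  rw [← completeHomog_singleton z, ← mul_completeHomog_cons_of_mul_eq_zero
    (by rw [mul_assoc, ← pow_succ, h.pow_mul_pow_eq_zero])]
  linear_combination y ^ (m + 1) * h.pow_mul_completeHomog_pair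

theorem pow_mul_pow_mul_pow_comm (h : IsFlagTriple m x y z) :
    x ^ (m + 2) * y ^ m * z ^ (m + 1) = -(x ^ (m + 2) * y ^ (m + 1) * z ^ m) := by
  have hyz := mul_completeHomog_cons_succ_of_mul_sq_eq_zero (w := x ^ (m + 2) * y ^ m)
    (by rw [mul_assoc, ← pow_add, h.pow_mul_pow_eq_zero]) [z] m
  rw [completeHomog_singleton, completeHomog_singleton] at hyz
  linear_combination y ^ m * h.pow_mul_completeHomog_pair - hyz

theorem pow_mul_pow_mul_pow_rotate (h : IsFlagTriple m x y z) :
    x ^ (m + 1) * y ^ m * z ^ (m + 2) = x ^ (m + 2) * y ^ (m + 1) * z ^ m := by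
  linear_combination y ^ m * h.swap_right.pow_mul_pow_comm - h.pow_mul_pow_mul_pow_comm

end IsFlagTriple

/-! ### The product of the blocks -/

section Absorption

variable {A : Type*} [CommSemiring A]

theorem mul_add_pow_of_mul_eq_zero {w a : A} (h : w * a = 0) (b : A) (n : ℕ) :
    w * (a + b) ^ n = w * b ^ n := by
  induction n with
  | zero => simp only [pow_zero]
  | succ n ih =>
    rw [pow_succ, ← mul_assoc, ih, mul_add, mul_right_comm, h, zero_mul, zero_add, mul_assoc,
      ← pow_succ]

theorem mul_add_pow_succ_of_mul_sq_eq_zero {w a : A} (h : w * a ^ 2 = 0) (b : A) (n : ℕ) :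
    w * (a + b) ^ (n + 1) = w * b ^ (n + 1) + (n + 1) * (w * a * b ^ n) := by
  obtain ⟨c, hc⟩ := Polynomial.powAddExpansion b a (n + 1)
  rw [add_comm a b, hc, mul_add, mul_comm c, ← mul_assoc, h, Nat.add_sub_cancel]
  push_cast
  ring

theorem mul_add_pow_succ_of_natCast_eq_zero {w a b : A} {n : ℕ} (hn : (n : A) = 0)
    (ha : w * a ^ 2 = 0) (hb : w * b ^ (n + 1) = 0) :
    w * (a + b) ^ (n + 1) = w * a * b ^ n := by
  rw [mul_add_pow_succ_of_mul_sq_eq_zero ha, hb, hn, zero_add, zero_add, one_mul]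

theorem mul_prod_congr_of_forall_mul_eq {ι : Type*} {S : Finset ι} {w : A} {f g : ι → A}
    (h : ∀ i ∈ S, w * f i = w * g i) : w * ∏ i ∈ S, f i = w * ∏ i ∈ S, g i := by
  induction S using Finset.cons_induction with
  | empty => simp only [Finset.prod_empty]
  | cons i S hi ih =>
    rw [Finset.forall_mem_cons] at h
    rw [Finset.prod_cons, Finset.prod_cons, mul_left_comm, ih h.2, mul_left_comm, ← mul_assoc,
      h.1, mul_assoc]

end Absorption

theorem add_pow_char_pow_add {A : Type*} [CommRing A] {p : ℕ} [Fact p.Prime] [CharP A p]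
    {a b : A} {q e : ℕ} (hq : q = p ^ e) (ha : a ^ (q + 1) = 0) (hb : b ^ (q + 1) = 0) (n : ℕ) :
    (a + b) ^ (q + n) = a ^ q * b ^ n + b ^ q * a ^ n := by
  have hab : (a + b) ^ q = a ^ q + b ^ q := by rw [hq, add_pow_char_pow]
  rw [pow_add, hab, add_mul, mul_add_pow_of_mul_eq_zero (by rw [← pow_succ, ha]), add_comm a b,
    mul_add_pow_of_mul_eq_zero (by rw [← pow_succ, hb])]

namespace IsFlagTriple

variable {A : Type*} [CommRing A]

theorem top_mul_add_pow {m : ℕ} {x y z : A} (h : IsFlagTriple m x y z) (u v w : A) (i j k : ℕ) :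
    x ^ (m + 2) * y ^ (m + 1) * z ^ m * ((x + u) ^ i * (y + v) ^ j * (z + w) ^ k) =
      x ^ (m + 2) * y ^ (m + 1) * z ^ m * (u ^ i * v ^ j * w ^ k) := by
  set T := x ^ (m + 2) * y ^ (m + 1) * z ^ m
  have hx : T * x = 0 := by linear_combination y ^ (m + 1) * z ^ m * h.pow_left_eq_zero
  have hy : T * y = 0 := by linear_combination z ^ m * h.pow_mul_pow_eq_zero
  have hz : T * z = 0 := by linear_combination h.pow_mul_pow_mul_pow_eq_zero
  linear_combination
    (y + v) ^ j * (z + w) ^ k * mul_add_pow_of_mul_eq_zero hx u i +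
      u ^ i * (z + w) ^ k * mul_add_pow_of_mul_eq_zero hy v j +
      u ^ i * v ^ j * mul_add_pow_of_mul_eq_zero hz w k

variable [CharP A 2] {a₁ a₂ a₃ b₁ b₂ b₃ c₁ c₂ c₃ : A}

theorem add_pow_mul_add_pow {m e : ℕ} (hq : m + 2 = 2 ^ e) (ha : IsFlagTriple m a₁ a₂ a₃)
    (hb : IsFlagTriple m b₁ b₂ b₃) :
    (a₁ + b₁) ^ (m + 2 + (m + 1)) * (a₂ + b₂) ^ (m + 2 + m) =
      a₁ ^ (m + 2) * a₂ ^ m * (b₁ ^ (m + 2) * b₂ ^ (m + 1)) +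
        a₁ ^ (m + 1) * a₂ ^ (m + 2) * (b₁ ^ (m + 2) * b₂ ^ m) := by
  have hb₁₂ := hb.pow_mul_pow_comm
  rw [CharTwo.neg_eq] at hb₁₂
  rw [add_pow_char_pow_add hq ha.pow_left_eq_zero hb.pow_left_eq_zero,
    add_pow_char_pow_add hq ha.swap_left.pow_left_eq_zero hb.swap_left.pow_left_eq_zero]
  linear_combination b₁ ^ (m + 1) * b₂ ^ m * ha.pow_mul_pow_eq_zero +
    a₁ ^ (m + 1) * a₂ ^ m * hb.pow_mul_pow_eq_zero + a₁ ^ (m + 2) * a₂ ^ m * hb₁₂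

theorem add_pow_mul_add_pow_mul_fst {m e : ℕ} (hq : m + 2 = 2 ^ e)
    (ha : IsFlagTriple m a₁ a₂ a₃) (hb : IsFlagTriple m b₁ b₂ b₃) :
    (a₁ + b₁) ^ (m + 2 + (m + 1)) * (a₂ + b₂) ^ (m + 2 + m) * a₁ = 0 := by
  rw [add_pow_mul_add_pow hq ha hb]
  linear_combination a₂ ^ m * (b₁ ^ (m + 2) * b₂ ^ (m + 1)) * ha.pow_left_eq_zero +
    b₁ ^ (m + 2) * b₂ ^ m * ha.pow_mul_pow_eq_zero

theorem add_pow_mul_add_pow_mul_snd {m e : ℕ} (hq : m + 2 = 2 ^ e)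
    (ha : IsFlagTriple m a₁ a₂ a₃) (hb : IsFlagTriple m b₁ b₂ b₃) :
    (a₁ + b₁) ^ (m + 2 + (m + 1)) * (a₂ + b₂) ^ (m + 2 + m) * a₂ =
      a₁ ^ (m + 2) * a₂ ^ (m + 1) * (b₁ ^ (m + 2) * b₂ ^ (m + 1)) := by
  rw [add_pow_mul_add_pow hq ha hb]
  linear_combination
    a₁ ^ (m + 1) * (b₁ ^ (m + 2) * b₂ ^ m) * ha.swap_left.pow_left_eq_zero

theorem add_pow_mul_add_pow_mul_thd_pow {m e : ℕ} (hq : m + 2 = 2 ^ e)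
    (ha : IsFlagTriple m a₁ a₂ a₃) (hb : IsFlagTriple m b₁ b₂ b₃) :
    (a₁ + b₁) ^ (m + 2 + (m + 1)) * (a₂ + b₂) ^ (m + 2 + m) * a₃ ^ (m + 2) = 0 := by
  rw [add_pow_mul_add_pow hq ha hb]
  linear_combination
    a₂ ^ m * (b₁ ^ (m + 2) * b₂ ^ (m + 1)) * ha.swap_right.pow_mul_pow_eq_zero +
      a₁ ^ (m + 1) * (b₁ ^ (m + 2) * b₂ ^ m) * ha.swap_left.swap_right.pow_mul_pow_eq_zero

theorem add_pow_mul_add_pow_mul_add_pow_fst_thd {m e : ℕ} (hq : m + 2 = 2 ^ e)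
    (ha : IsFlagTriple m a₁ a₂ a₃) (hb : IsFlagTriple m b₁ b₂ b₃) (hc : IsFlagTriple m c₁ c₂ c₃)
    (j k : ℕ) :
    (a₁ + b₁) ^ (m + 2 + (m + 1)) * (a₂ + b₂) ^ (m + 2 + m) *
        ((a₁ + c₁) ^ j * (a₃ + c₃) ^ (m + 2 + k)) =
      (a₁ + b₁) ^ (m + 2 + (m + 1)) * (a₂ + b₂) ^ (m + 2 + m) *
        (a₃ ^ k * (c₁ ^ j * c₃ ^ (m + 2))) := by
  rw [← mul_assoc, mul_add_pow_of_mul_eq_zero (add_pow_mul_add_pow_mul_fst hq ha hb),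
    add_pow_char_pow_add hq ha.swap_right.swap_left.pow_left_eq_zero
      hc.swap_right.swap_left.pow_left_eq_zero]
  linear_combination c₁ ^ j * c₃ ^ k * add_pow_mul_add_pow_mul_thd_pow hq ha hb

theorem blocks_eq_top_mul_top_mul_top {n e : ℕ} (hq : n + 3 = 2 ^ e)
    (ha : IsFlagTriple (n + 1) a₁ a₂ a₃) (hb : IsFlagTriple (n + 1) b₁ b₂ b₃)
    (hc : IsFlagTriple (n + 1) c₁ c₂ c₃) :
    (a₁ + b₁) ^ (n + 3 + (n + 2)) * (a₂ + b₂) ^ (n + 3 + (n + 1)) * (a₃ + b₃) ^ (n + 2) *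
        ((a₁ + c₁) ^ (n + 2) * (a₂ + c₂) ^ (n + 2) * (a₃ + c₃) ^ (n + 3 + n)) =
      a₁ ^ (n + 3) * a₂ ^ (n + 2) * a₃ ^ (n + 1) * (b₁ ^ (n + 3) * b₂ ^ (n + 2) * b₃ ^ (n + 1)) *
        (c₁ ^ (n + 3) * c₂ ^ (n + 2) * c₃ ^ (n + 1)) := by
  have hn : ((n + 1 : ℕ) : A) = 0 := by
    have hdvd : 2 ∣ 2 ^ e := dvd_pow_self 2 (by rintro rfl; omega)
    exact (CharP.cast_eq_zero_iff A 2 (n + 1)).mpr (by omega)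
  set G := (a₁ + b₁) ^ (n + 3 + (n + 2)) * (a₂ + b₂) ^ (n + 3 + (n + 1))
  have hGa₂ : G * a₂ = a₁ ^ (n + 3) * a₂ ^ (n + 2) * (b₁ ^ (n + 3) * b₂ ^ (n + 2)) :=
    add_pow_mul_add_pow_mul_snd hq ha hb
  set w := G * (a₃ ^ n * (c₁ ^ (n + 2) * c₃ ^ (n + 3)))
  have hw₁₃ : G * ((a₁ + c₁) ^ (n + 2) * (a₃ + c₃) ^ (n + 3 + n)) = w :=
    add_pow_mul_add_pow_mul_add_pow_fst_thd hq ha hb hc _ _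
  set u := a₁ ^ (n + 3) * a₂ ^ (n + 2) * a₃ ^ n * (b₁ ^ (n + 3) * b₂ ^ (n + 2))
  have hwa₂ : w * a₂ = u * (c₁ ^ (n + 2) * c₃ ^ (n + 3)) := by
    linear_combination a₃ ^ n * (c₁ ^ (n + 2) * c₃ ^ (n + 3)) * hGa₂
  have hwa₂_sq : w * a₂ ^ 2 = 0 := by
    linear_combination a₂ * hwa₂ + a₃ ^ n * (b₁ ^ (n + 3) * b₂ ^ (n + 2)) *
      (c₁ ^ (n + 2) * c₃ ^ (n + 3)) * ha.pow_mul_pow_eq_zero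
  have hwc₂ : w * c₂ ^ (n + 2) = 0 := by
    linear_combination G * a₃ ^ n * hc.swap_right.swap_left.pow_mul_pow_mul_pow_eq_zero
  have hua₃_sq : u * a₃ ^ 2 = 0 := by
    linear_combination b₁ ^ (n + 3) * b₂ ^ (n + 2) * ha.pow_mul_pow_mul_pow_eq_zero
  have hub₃ : u * b₃ ^ (n + 2) = 0 := by
    linear_combination a₁ ^ (n + 3) * a₂ ^ (n + 2) * a₃ ^ n * hb.pow_mul_pow_mul_pow_eq_zero
  calc
    _ = G * ((a₁ + c₁) ^ (n + 2) * (a₃ + c₃) ^ (n + 3 + n)) * (a₂ + c₂) ^ (n + 2) *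
          (a₃ + b₃) ^ (n + 2) := by ac_rfl
    _ = u * (c₁ ^ (n + 2) * c₃ ^ (n + 3)) * c₂ ^ (n + 1) * (a₃ + b₃) ^ (n + 2) := by
      rw [hw₁₃, mul_add_pow_succ_of_natCast_eq_zero hn hwa₂_sq hwc₂, hwa₂]
    _ = u * (a₃ + b₃) ^ (n + 2) * (c₁ ^ (n + 2) * c₂ ^ (n + 1) * c₃ ^ (n + 3)) := by ac_rfl
    _ = u * a₃ * b₃ ^ (n + 1) * (c₁ ^ (n + 3) * c₂ ^ (n + 2) * c₃ ^ (n + 1)) := by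
      rw [mul_add_pow_succ_of_natCast_eq_zero hn hua₃_sq hub₃, hc.pow_mul_pow_mul_pow_rotate]
    _ = _ := by ring

end IsFlagTriple

theorem prod_univ_fin_eq_mul_prod_filter {M : Type*} [CommMonoid M] {s : ℕ} (hs : 2 < s)
    (f : Fin s → M) :
    ∏ i, f i = f ⟨0, by omega⟩ * f ⟨1, by omega⟩ * f ⟨2, hs⟩ *
      ∏ i ∈ Finset.univ.filter (fun i : Fin s => 3 ≤ i.val), f i := by
  have hlt : (Finset.univ.filter fun i : Fin s => ¬3 ≤ i.val) =
      {⟨0, by omega⟩, ⟨1, by omega⟩, ⟨2, hs⟩} := by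
    ext i
    simp only [Finset.mem_filter_univ, Finset.mem_insert, Finset.mem_singleton, Fin.ext_iff]
    omega
  rw [← Finset.prod_filter_not_mul_prod_filter Finset.univ (fun i : Fin s => 3 ≤ i.val), hlt,
    Finset.prod_insert (by simp), Finset.prod_pair (by simp), ← mul_assoc]

theorem prod_blocks_eq_prod_top {A : Type*} [CommRing A] [CharP A 2] {s e : ℕ} (hs : 2 < s)
    (he : 2 ≤ e) {x : Fin s → Fin 3 → A}
    (hx : ∀ i, IsFlagTriple (2 ^ e - 2) (x i 0) (x i 1) (x i 2)) :
    ((x ⟨0, by omega⟩ 0 + x ⟨1, by omega⟩ 0) ^ (2 ^ (e + 1) - 1) *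
          (x ⟨0, by omega⟩ 1 + x ⟨1, by omega⟩ 1) ^ (2 ^ (e + 1) - 2) *
          (x ⟨0, by omega⟩ 2 + x ⟨1, by omega⟩ 2) ^ (2 ^ e - 1)) *
        ((x ⟨0, by omega⟩ 0 + x ⟨2, hs⟩ 0) ^ (2 ^ e - 1) *
          (x ⟨0, by omega⟩ 1 + x ⟨2, hs⟩ 1) ^ (2 ^ e - 1) *
          (x ⟨0, by omega⟩ 2 + x ⟨2, hs⟩ 2) ^ (2 ^ (e + 1) - 3)) *
        ∏ i ∈ Finset.univ.filter (fun i : Fin s => 3 ≤ i.val),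
          ((x ⟨0, by omega⟩ 0 + x i 0) ^ (2 ^ e) *
            (x ⟨0, by omega⟩ 1 + x i 1) ^ (2 ^ e - 1) *
            (x ⟨0, by omega⟩ 2 + x i 2) ^ (2 ^ e - 2)) =
      ∏ i : Fin s, (x i 0 ^ (2 ^ e) * x i 1 ^ (2 ^ e - 1) * x i 2 ^ (2 ^ e - 2)) := by
  obtain ⟨n, hn⟩ : ∃ n, 2 ^ e = n + 3 :=
    Nat.exists_eq_add_of_le' ((by norm_num : 3 ≤ 2 ^ 2).trans (Nat.pow_le_pow_right two_pos he))
  have hq₁ : 2 ^ (e + 1) - 1 = n + 3 + (n + 2) := by omega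
  have hq₂ : 2 ^ (e + 1) - 2 = n + 3 + (n + 1) := by omega
  have hq₃ : 2 ^ (e + 1) - 3 = n + 3 + n := by omega
  simp only [hq₁, hq₂, hq₃, hn, Nat.reduceSubDiff] at hx ⊢
  have habsorb := mul_prod_congr_of_forall_mul_eq
    (S := Finset.univ.filter fun i : Fin s => 3 ≤ i.val) fun i _ =>
      (hx ⟨0, by omega⟩).top_mul_add_pow (x i 0) (x i 1) (x i 2) (n + 3) (n + 2) (n + 1)
  rw [IsFlagTriple.blocks_eq_top_mul_top_mul_top hn.symm (hx _) (hx _) (hx _),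
    prod_univ_fin_eq_mul_prod_filter hs]
  linear_combination x ⟨1, by omega⟩ 0 ^ (n + 3) * x ⟨1, by omega⟩ 1 ^ (n + 2) *
    x ⟨1, by omega⟩ 2 ^ (n + 1) * (x ⟨2, hs⟩ 0 ^ (n + 3) *
      x ⟨2, hs⟩ 1 ^ (n + 2) * x ⟨2, hs⟩ 2 ^ (n + 1)) * habsorb

/-! ### The top monomial is nonzero -/

section Tower

open Polynomial (C X)

universe u

variable {A : Type u} [CommRing A]

theorem monic_and_natDegree_completeHomog_X_cons_map_C [Nontrivial A] (l : List A) (d : ℕ) :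
    (completeHomog (X :: l.map C) d).Monic ∧ (completeHomog (X :: l.map C) d).natDegree = d := by
  set r := ∑ t ∈ Finset.range d, X ^ t * C (completeHomog l (d - t)) with hr
  have hsum : completeHomog (X :: l.map C) d = X ^ d + r := by
    rw [completeHomog, Finset.sum_range_succ, Nat.sub_self, completeHomog_zero, mul_one, add_comm]
    simp only [hr, map_completeHomog]
  have hdeg : r.degree < d := by
    refine (Polynomial.degree_sum_le _ _).trans_lt
      ((Finset.sup_lt_iff (WithBot.bot_lt_coe d)).mpr fun t ht => ?_)
    rw [mul_comm]
    exact (Polynomial.degree_C_mul_X_pow_le t _).trans_lt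
      (Nat.cast_lt.mpr (Finset.mem_range.mp ht))
  rw [hsum]
  refine ⟨Polynomial.monic_X_pow_add hdeg, ?_⟩
  rw [Polynomial.natDegree_add_eq_left_of_degree_lt (by rwa [Polynomial.degree_X_pow]),
    Polynomial.natDegree_X_pow]

theorem exists_ringHom_completeHomog_cons_eq_zero (l : List A) (d : ℕ) :
    ∃ (B : Type u) (_ : CommRing B) (ι : A →+* B) (z : B),
      completeHomog (z :: l.map ι) (d + 1) = 0 ∧ ∀ a ≠ 0, ι a * z ^ d ≠ 0 := by
  set p := completeHomog (X :: l.map C) (d + 1) with hp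
  refine ⟨AdjoinRoot p, inferInstance, AdjoinRoot.of p, AdjoinRoot.root p, ?_, fun a ha => ?_⟩
  · have hroot := map_completeHomog (AdjoinRoot.mk p) (X :: l.map C) (d + 1)
    rw [← hp, AdjoinRoot.mk_self, List.map_cons, List.map_map, AdjoinRoot.mk_X] at hroot
    exact hroot.symm
  · have := nontrivial_of_ne a 0 ha
    obtain ⟨hmonic, hdeg⟩ := monic_and_natDegree_completeHomog_X_cons_map_C l (d + 1)
    rw [← AdjoinRoot.mk_C, ← AdjoinRoot.mk_X, ← map_pow, ← map_mul, Ne, AdjoinRoot.mk_eq_zero]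
    refine hmonic.not_dvd_of_natDegree_lt ?_ ?_
    · rwa [Ne, Polynomial.C_mul_X_pow_eq_monomial, Polynomial.monomial_eq_zero_iff]
    · rw [hdeg]
      exact (Polynomial.natDegree_C_mul_X_pow_le a d).trans_lt d.lt_succ_self

theorem exists_ringHom_completeHomog_eq_zero_prod_pow_ne_zero [Nontrivial A] {N k : ℕ}
    (hk : k ≤ N) :
    ∃ (B : Type u) (_ : CommRing B) (_ : A →+* B) (x : ℕ → B),
      (∀ j < k, completeHomog ((List.range (j + 1)).map x) (N - j) = 0) ∧
        ∏ j ∈ Finset.range k, x j ^ (N - 1 - j) ≠ 0 := by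
  induction k with
  | zero => exact ⟨A, inferInstance, RingHom.id A, 0, by simp, by simp⟩
  | succ k ih =>
    obtain ⟨B, _, f, x, hx, hne⟩ := ih (by omega)
    obtain ⟨B', _, ι, z, hz, hι⟩ :=
      exists_ringHom_completeHomog_cons_eq_zero ((List.range k).map x) (N - 1 - k)
    let x' : ℕ → B' := Function.update (ι ∘ x) k z
    have hx' : ∀ j < k, x' j = ι (x j) := fun j hj => Function.update_of_ne hj.ne _ _
    have hx'k : x' k = z := Function.update_self _ _ _
    have hmap : ∀ j ≤ k, (List.range j).map x' = ((List.range j).map x).map ι := fun j hj => by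
      rw [List.map_map]
      exact List.map_congr_left fun i hi => hx' i ((List.mem_range.mp hi).trans_le hj)
    refine ⟨B', inferInstance, ι.comp f, x', fun j hj => ?_, ?_⟩
    · rcases Nat.lt_succ_iff_lt_or_eq.mp hj with hj | rfl
      · rw [hmap _ hj, ← map_completeHomog, hx j hj, map_zero]
      · rw [List.range_succ, List.map_append, List.map_singleton, hmap _ le_rfl, hx'k,
          completeHomog_perm (List.perm_append_singleton _ _),
          show N - j = N - 1 - j + 1 by omega, hz]
    · have hprod : ∏ j ∈ Finset.range k, x' j ^ (N - 1 - j) =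
          ι (∏ j ∈ Finset.range k, x j ^ (N - 1 - j)) := by
        rw [map_prod]
        exact Finset.prod_congr rfl fun j hj => by
          rw [hx' j (Finset.mem_range.mp hj), map_pow]
      rw [Finset.prod_range_succ, hprod, hx'k]
      exact hι _ hne

end Tower

section FlagRing

variable (k m : ℕ)

theorem map_take_finRange {α : Type*} (x : ℕ → α) {n : ℕ} (hn : n ≤ k) :
    ((List.finRange k).take n).map (fun j : Fin k => x j) = (List.range n).map x := by
  rw [← min_eq_left hn, ← List.take_range, ← List.map_coe_finRange_eq_range, ← List.map_take,
    List.map_map, min_eq_left hn, Function.comp_def]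

theorem completeHomog_xGen_eq_zero {i : ℕ} (hi : 1 ≤ i) (hik : i ≤ k) :
    completeHomog (((List.finRange k).take (k + 1 - i)).map (xGen k m)) (m + i) = 0 := by
  have hmem : completeHomog (((List.finRange k).take (k + 1 - i)).map MvPolynomial.X) (m + i) ∈
      flagIdeal k m := Ideal.subset_span ⟨i, hi, hik, rfl⟩
  rw [← Ideal.Quotient.eq_zero_iff_mem, map_completeHomog, List.map_map] at hmem
  exact hmem

theorem prod_xGen_pow_ne_zero : ∏ j : Fin k, xGen k m j ^ (m + k - 1 - j) ≠ 0 := by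
  obtain ⟨B, _, ι, x, hx, hne⟩ :=
    exists_ringHom_completeHomog_eq_zero_prod_pow_ne_zero (A := ZMod 2) (Nat.le_add_left k m)
  let f : MvPolynomial (Fin k) (ZMod 2) →+* B := MvPolynomial.eval₂Hom ι fun j => x j
  have hfX : ∀ j : Fin k, f (.X j) = x j := MvPolynomial.eval₂Hom_X' ι _
  have hker : flagIdeal k m ≤ RingHom.ker f := by
    refine Ideal.span_le.mpr ?_
    rintro p ⟨i, hi, hik, rfl⟩
    rw [SetLike.mem_coe, RingHom.mem_ker, map_completeHomog, List.map_map,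
      show f ∘ MvPolynomial.X = fun j : Fin k => x j from funext hfX,
      map_take_finRange k x (by omega)]
    have hrel := hx (k - i) (by omega)
    rwa [show k - i + 1 = k + 1 - i by omega, show m + k - (k - i) = m + i by omega] at hrel
  have hlift : ∀ j, Ideal.Quotient.lift (flagIdeal k m) f hker (xGen k m j) = x j :=
    fun j => (Ideal.Quotient.lift_mk _ _ _).trans (hfX j)
  rw [Finset.prod_range] at hne
  refine fun h => hne ?_
  simpa only [map_prod, map_pow, map_zero, hlift] using
    congrArg (Ideal.Quotient.lift (flagIdeal k m) f hker) h

theorem isFlagTriple_xGen : IsFlagTriple m (xGen 3 m 0) (xGen 3 m 1) (xGen 3 m 2) where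
  completeHomog_one := completeHomog_xGen_eq_zero 3 m (i := 3) (by simp) le_rfl
  completeHomog_two := completeHomog_xGen_eq_zero 3 m (i := 2) (by simp) (by simp)
  completeHomog_three := completeHomog_xGen_eq_zero 3 m (i := 1) le_rfl (by simp)

end FlagRing

/-! ### Tensor powers -/

theorem piTensorProduct_tprod_ne_zero {R ι : Type*} [CommRing R] [IsDomain R] [Finite ι]
    {M : ι → Type*} [∀ i, AddCommGroup (M i)] [∀ i, Module R (M i)]
    [∀ i, Module.Projective R (M i)] {v : ∀ i, M i} (hv : ∀ i, v i ≠ 0) :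
    PiTensorProduct.tprod R v ≠ 0 := by
  have := Fintype.ofFinite ι
  choose φ hφ using fun i => Module.Projective.exists_dual_ne_zero R (hv i)
  intro h
  have hprod := congrArg (PiTensorProduct.lift
    ((MultilinearMap.mkPiAlgebra R ι R).compLinearMap φ)) h
  rw [PiTensorProduct.lift.tprod, map_zero] at hprod
  exact Finset.prod_ne_zero_iff.mpr (fun i _ => hφ i) hprod

theorem prod_singleAlgHom {R ι : Type*} [CommSemiring R] [Fintype ι] [DecidableEq ι]
    {A : ι → Type*} [∀ i, CommSemiring (A i)] [∀ i, Algebra R (A i)] (a : ∀ i, A i) :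
    ∏ i, PiTensorProduct.singleAlgHom (R := R) i (a i) = PiTensorProduct.tprod R a := by
  simp only [PiTensorProduct.singleAlgHom_apply]
  rw [← PiTensorProduct.tprod_prod]
  exact congrArg _ (Finset.univ_prod_mulSingle a)

section TensorPower

variable (k m s : ℕ)

theorem xT_eq_singleAlgHom (i : Fin s) (j : Fin k) :
    xT k m s i j = PiTensorProduct.singleAlgHom (R := ZMod 2) (A := fun _ => FlagRing k m) i
      (xGen k m j) := by
  rw [xT, PiTensorProduct.singleAlgHom_apply]
  congr 1
  funext t
  by_cases h : t = i
  · subst h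
    simp
  · simp [h]

theorem prod_xT_pow_ne_zero :
    ∏ i : Fin s, ∏ j : Fin k, xT k m s i j ^ (m + k - 1 - j) ≠ 0 := by
  simp only [xT_eq_singleAlgHom, ← map_pow, ← map_prod]
  rw [prod_singleAlgHom]
  exact piTensorProduct_tprod_ne_zero fun _ => prod_xGen_pow_ne_zero k m

theorem isFlagTriple_xT (i : Fin s) :
    IsFlagTriple m (xT 3 m s i 0) (xT 3 m s i 1) (xT 3 m s i 2) := by
  simp only [xT_eq_singleAlgHom]
  exact (isFlagTriple_xGen m).map (B := ⨂[ZMod 2] _ : Fin s, FlagRing 3 m)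
    (PiTensorProduct.singleAlgHom (R := ZMod 2) (A := fun _ => FlagRing 3 m) i).toRingHom

instance charP_tensorPower : CharP (⨂[ZMod 2] _ : Fin s, FlagRing k m) 2 :=
  have := nontrivial_of_ne _ _ (prod_xT_pow_ne_zero k m s)
  charP_of_injective_algebraMap' (ZMod 2) 2

end TensorPower

theorem statement18_general (s e : ℕ) (hs : 2 < s) (he : 2 ≤ e) :
    (zT 3 (2 ^ e - 2) s (by omega) ⟨1, by omega⟩ 0 ^ (2 ^ (e + 1) - 1) *
            zT 3 (2 ^ e - 2) s (by omega) ⟨1, by omega⟩ 1 ^ (2 ^ (e + 1) - 2) *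
            zT 3 (2 ^ e - 2) s (by omega) ⟨1, by omega⟩ 2 ^ (2 ^ e - 1)) *
          (zT 3 (2 ^ e - 2) s (by omega) ⟨2, hs⟩ 0 ^ (2 ^ e - 1) *
            zT 3 (2 ^ e - 2) s (by omega) ⟨2, hs⟩ 1 ^ (2 ^ e - 1) *
            zT 3 (2 ^ e - 2) s (by omega) ⟨2, hs⟩ 2 ^ (2 ^ (e + 1) - 3)) *
          ∏ i ∈ Finset.univ.filter (fun i : Fin s => 3 ≤ i.val),
            (zT 3 (2 ^ e - 2) s (by omega) i 0 ^ (2 ^ e) *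
              zT 3 (2 ^ e - 2) s (by omega) i 1 ^ (2 ^ e - 1) *
              zT 3 (2 ^ e - 2) s (by omega) i 2 ^ (2 ^ e - 2)) =
        ∏ i : Fin s,
          (xT 3 (2 ^ e - 2) s i 0 ^ (2 ^ e) *
            xT 3 (2 ^ e - 2) s i 1 ^ (2 ^ e - 1) *
            xT 3 (2 ^ e - 2) s i 2 ^ (2 ^ e - 2)) ∧
      ∏ i : Fin s,
          (xT 3 (2 ^ e - 2) s i 0 ^ (2 ^ e) *
            xT 3 (2 ^ e - 2) s i 1 ^ (2 ^ e - 1) *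
            xT 3 (2 ^ e - 2) s i 2 ^ (2 ^ e - 2)) ≠ 0 := by
  have heq := prod_blocks_eq_prod_top (A := ⨂[ZMod 2] _ : Fin s, FlagRing 3 (2 ^ e - 2))
    hs he (isFlagTriple_xT (2 ^ e - 2) s)
  refine ⟨heq, ?_⟩
  have hne := prod_xT_pow_ne_zero 3 (2 ^ e - 2) s
  have hfour : 2 ^ 2 ≤ 2 ^ e := Nat.pow_le_pow_right two_pos he
  simp only [Fin.prod_univ_three, Fin.val_zero, Fin.val_one, Fin.val_two] at hne
  rwa [show 2 ^ e - 2 + 3 - 1 - 0 = 2 ^ e by omega, show 2 ^ e - 2 + 3 - 1 - 1 = 2 ^ e - 1 by omega,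
    show 2 ^ e - 2 + 3 - 1 - 2 = 2 ^ e - 2 by omega] at hne

/-- for `s ≥ 3` and `e ≥ 2`, in `R(3, 2^e-2)^{⊗s}` the element
`(z_{2,1}^{2^{e+1}-1} z_{2,2}^{2^{e+1}-2} z_{2,3}^{2^e-1}) ·
(z_{3,1}^{2^e-1} z_{3,2}^{2^e-1} z_{3,3}^{2^{e+1}-3}) ·
∏_{i=4}^{s} (z_{i,1}^{2^e} z_{i,2}^{2^e-1} z_{i,3}^{2^e-2})` is nonzero; moreover for
`s = 3` it equals the top basis element `∏_{i=1}^{3} x_{i,1}^{2^e} x_{i,2}^{2^e-1} x_{i,3}^{2^e-2}`. -/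
theorem statement18 (s e : ℕ) (hs : 3 ≤ s) (he : 2 ≤ e) :
    ((zT 3 (2 ^ e - 2) s (by omega) ⟨1, by omega⟩ 0 ^ (2 ^ (e + 1) - 1) *
          zT 3 (2 ^ e - 2) s (by omega) ⟨1, by omega⟩ 1 ^ (2 ^ (e + 1) - 2) *
          zT 3 (2 ^ e - 2) s (by omega) ⟨1, by omega⟩ 2 ^ (2 ^ e - 1)) *
        (zT 3 (2 ^ e - 2) s (by omega) ⟨2, by omega⟩ 0 ^ (2 ^ e - 1) *
          zT 3 (2 ^ e - 2) s (by omega) ⟨2, by omega⟩ 1 ^ (2 ^ e - 1) *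
          zT 3 (2 ^ e - 2) s (by omega) ⟨2, by omega⟩ 2 ^ (2 ^ (e + 1) - 3)) *
        ∏ i ∈ Finset.univ.filter (fun i : Fin s => 3 ≤ i.val),
          (zT 3 (2 ^ e - 2) s (by omega) i 0 ^ (2 ^ e) *
            zT 3 (2 ^ e - 2) s (by omega) i 1 ^ (2 ^ e - 1) *
            zT 3 (2 ^ e - 2) s (by omega) i 2 ^ (2 ^ e - 2)) ≠ 0) ∧
    (s = 3 →
      (zT 3 (2 ^ e - 2) s (by omega) ⟨1, by omega⟩ 0 ^ (2 ^ (e + 1) - 1) *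
          zT 3 (2 ^ e - 2) s (by omega) ⟨1, by omega⟩ 1 ^ (2 ^ (e + 1) - 2) *
          zT 3 (2 ^ e - 2) s (by omega) ⟨1, by omega⟩ 2 ^ (2 ^ e - 1)) *
        (zT 3 (2 ^ e - 2) s (by omega) ⟨2, by omega⟩ 0 ^ (2 ^ e - 1) *
          zT 3 (2 ^ e - 2) s (by omega) ⟨2, by omega⟩ 1 ^ (2 ^ e - 1) *
          zT 3 (2 ^ e - 2) s (by omega) ⟨2, by omega⟩ 2 ^ (2 ^ (e + 1) - 3)) *
        ∏ i ∈ Finset.univ.filter (fun i : Fin s => 3 ≤ i.val),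
          (zT 3 (2 ^ e - 2) s (by omega) i 0 ^ (2 ^ e) *
            zT 3 (2 ^ e - 2) s (by omega) i 1 ^ (2 ^ e - 1) *
            zT 3 (2 ^ e - 2) s (by omega) i 2 ^ (2 ^ e - 2)) =
      ∏ i : Fin s,
        (xT 3 (2 ^ e - 2) s i 0 ^ (2 ^ e) *
          xT 3 (2 ^ e - 2) s i 1 ^ (2 ^ e - 1) *
          xT 3 (2 ^ e - 2) s i 2 ^ (2 ^ e - 2))) := by
  obtain ⟨heq, hne⟩ := statement18_general s e hs he
  exact ⟨heq ▸ hne, fun _ => heq⟩
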